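/- arXiv:2102.02730 — 3 statements merged into one kernel-verified Lean document; each statement's English description precedes it below -/
import Mathlib

section
/- Let n ≥ 1, let U be an n×n real orthogonal matrix (Uᵀ * U = 1), and let p, v : Fin n → ℝ satisfy p ℓ ≥ 0 and v ℓ > 0 for all ℓ. Define the diagonal matrices Λ_x = diagonal p, Λ_v = diagonal v, and Λ = diagonal (fun ℓ => Real.sqrt ((p ℓ + v ℓ) / v ℓ)). Let ε ∈ ℝ with ε = 1 or ε = -1, and set A = ε • (U * Λ * Uᵀ), V = U * Λ_v * Uᵀ, P = U * Λ_x * Uᵀ. Then P is positive semidefinite, P + V is invertible, and P satisfies the algebraic Riccati equation P = A * P * Aᵀ - A * P * (P + V)⁻¹ * P * Aᵀ. -/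
open Matrix

theorem conj_mul_aux {n : ℕ} (U : Matrix (Fin n) (Fin n) ℝ) (hU : Uᵀ * U = 1)
    (a b : Fin n → ℝ) :
    (U * diagonal a * Uᵀ) * (U * diagonal b * Uᵀ) = U * diagonal (fun i => a i * b i) * Uᵀ := by
  calc (U * diagonal a * Uᵀ) * (U * diagonal b * Uᵀ)
      = U * diagonal a * (Uᵀ * U) * diagonal b * Uᵀ := by simp only [Matrix.mul_assoc]
    _ = _ := by rw [hU, Matrix.mul_one, Matrix.mul_assoc U, diagonal_mul_diagonal]

theorem stmt_0 (n : ℕ) (hn : 1 ≤ n)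
    (U : Matrix (Fin n) (Fin n) ℝ) (hU : Uᵀ * U = 1)
    (p v : Fin n → ℝ) (hp : ∀ ℓ, 0 ≤ p ℓ) (hv : ∀ ℓ, 0 < v ℓ)
    (ε : ℝ) (hε : ε = 1 ∨ ε = -1)
    (Λx Λv Λ A V P : Matrix (Fin n) (Fin n) ℝ)
    (hΛx : Λx = Matrix.diagonal p)
    (hΛv : Λv = Matrix.diagonal v)
    (hΛ : Λ = Matrix.diagonal (fun ℓ => Real.sqrt ((p ℓ + v ℓ) / v ℓ)))
    (hA : A = ε • (U * Λ * Uᵀ))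
    (hV : V = U * Λv * Uᵀ)
    (hP : P = U * Λx * Uᵀ) :
    P.PosSemidef ∧ IsUnit (P + V).det ∧
      P = A * P * Aᵀ - A * P * (P + V)⁻¹ * P * Aᵀ := by
  have hU' : U * Uᵀ = 1 := mul_eq_one_comm.mp hU
  have hpv : ∀ ℓ, 0 < p ℓ + v ℓ := fun ℓ => add_pos_of_nonneg_of_pos (hp ℓ) (hv ℓ)
  have hS : P + V = U * diagonal (fun i => p i + v i) * Uᵀ := by
    rw [hP, hV, hΛx, hΛv, ← Matrix.add_mul, ← Matrix.mul_add, diagonal_add]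
  have hSI : (P + V) * (U * diagonal (fun i => (p i + v i)⁻¹) * Uᵀ) = 1 := by
    rw [hS, conj_mul_aux U hU]
    have : (fun i => (p i + v i) * (p i + v i)⁻¹) = fun _ => (1 : ℝ) := by
      funext i
      exact mul_inv_cancel₀ (hpv i).ne'
    rw [this, diagonal_one, Matrix.mul_one, hU']
  have hT : (U * Λ * Uᵀ)ᵀ = U * Λ * Uᵀ := by
    rw [hΛ]
    simp [Matrix.transpose_mul, Matrix.mul_assoc]
  have hee : ε * ε = 1 := by rcases hε with h | h <;> rw [h] <;> norm_num
  refine ⟨?_, ?_, ?_⟩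
  · rw [hP, hΛx]
    have h := (PosSemidef.diagonal (d := p) hp).mul_mul_conjTranspose_same U
    simpa using h
  · exact (Matrix.isUnit_iff_isUnit_det _).mp (IsUnit.of_mul_eq_one _ hSI)
  · rw [Matrix.inv_eq_right_inv hSI, hA, transpose_smul, hT, hP, hΛ, hΛx]
    simp only [Matrix.smul_mul, Matrix.mul_smul, smul_smul, hee, one_smul, conj_mul_aux U hU]
    rw [← Matrix.sub_mul, ← Matrix.mul_sub, diagonal_sub]
    congr 3
    funext i
    have h1 := Real.mul_self_sqrt (div_pos (hpv i) (hv i)).le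
    have h2 := (hpv i).ne'
    have h3 := (hv i).ne'
    generalize Real.sqrt ((p i + v i) / v i) = s at *
    have : s * p i * s - s * p i * (p i + v i)⁻¹ * p i * s
        = (s * s) * (p i - p i * (p i + v i)⁻¹ * p i) := by ring
    rw [this, h1]
    field_simp
    ring
end

section
/- Let n ≥ 1 and let p, v : Fin n → ℝ satisfy p ℓ ≥ 0 and v ℓ > 0 for all ℓ. Define diagonal matrices Λ_x = diagonal p, Λ_v = diagonal v, and Λ = diagonal (fun ℓ => Real.sqrt ((p ℓ + v ℓ) / v ℓ)). Then Λ_x + Λ_v is invertible and Λ_x = Λ * Λ_x * Λ - Λ * Λ_x * (Λ_x + Λ_v)⁻¹ * Λ_x * Λ. -/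
open Matrix

theorem stmt_1 (n : ℕ) (hn : 1 ≤ n)
    (p v : Fin n → ℝ) (hp : ∀ ℓ, 0 ≤ p ℓ) (hv : ∀ ℓ, 0 < v ℓ)
    (Λx Λv Λ : Matrix (Fin n) (Fin n) ℝ)
    (hΛx : Λx = Matrix.diagonal p)
    (hΛv : Λv = Matrix.diagonal v)
    (hΛ : Λ = Matrix.diagonal (fun ℓ => Real.sqrt ((p ℓ + v ℓ) / v ℓ))) :
    IsUnit (Λx + Λv).det ∧
      Λx = Λ * Λx * Λ - Λ * Λx * (Λx + Λv)⁻¹ * Λx * Λ := by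
  subst hΛx hΛv hΛ
  have hpos : ∀ ℓ, 0 < p ℓ + v ℓ := fun ℓ => add_pos_of_nonneg_of_pos (hp ℓ) (hv ℓ)
  have hinv : (Matrix.diagonal p + Matrix.diagonal v)⁻¹
      = Matrix.diagonal (fun ℓ => (p ℓ + v ℓ)⁻¹) := by
    apply Matrix.inv_eq_right_inv
    rw [Matrix.diagonal_add, Matrix.diagonal_mul_diagonal, ← Matrix.diagonal_one]
    congr 1
    funext ℓ
    exact mul_inv_cancel₀ (hpos ℓ).ne'
  refine ⟨?_, ?_⟩
  · rw [Matrix.diagonal_add, Matrix.det_diagonal, isUnit_iff_ne_zero]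
    exact Finset.prod_ne_zero_iff.mpr fun ℓ _ => (hpos ℓ).ne'
  · rw [hinv]
    simp only [Matrix.diagonal_mul_diagonal, Matrix.diagonal_sub]
    congr 1
    funext ℓ
    have h1 := (hpos ℓ).ne'
    have h2 := (hv ℓ).ne'
    have hs := Real.mul_self_sqrt (div_nonneg (hpos ℓ).le (hv ℓ).le)
    generalize Real.sqrt ((p ℓ + v ℓ) / v ℓ) = s at hs ⊢
    have : s * p ℓ * s - s * p ℓ * (p ℓ + v ℓ)⁻¹ * p ℓ * s
        = (s * s) * (p ℓ - p ℓ * (p ℓ + v ℓ)⁻¹ * p ℓ) := by ring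
    rw [this, hs]
    field_simp
    ring
end

section
/- Let n, m ≥ 1, let λ : Fin n → ℝ with λ ℓ ≠ 0 for all ℓ, and let Λ = diagonal λ (an n×n matrix). Let F : Fin p → Matrix (Fin m) (Fin m) ℝ and G : Fin q → Matrix (Fin m) (Fin m) ℝ be families of m×m matrices such that for each ℓ the m×m matrix B ℓ := 1 + ∑ j, (λ ℓ)^{-(j+1)} • G j is invertible. Set M₁ := 1 - ∑ i, (Λ⁻¹ ^ (i+1) ⊗ₖ F i) and M₂ := 1 + ∑ j, (Λ⁻¹ ^ (j+1) ⊗ₖ G j), both (n·m)×(n·m) matrices indexed by Fin n × Fin m. Then M₂ is invertible, and M₁ * M₂⁻¹ is block diagonal with blocks given by the scalar substitutions: for all ℓ, ℓ' : Fin n and a, b : Fin m, (M₁ * M₂⁻¹) (ℓ, a) (ℓ', b) equals ((1 - ∑ i, (λ ℓ)^{-(i+1)} • F i) * (B ℓ)⁻¹) a b if ℓ = ℓ', and 0 otherwise. -/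
open Matrix Kronecker

theorem aux_bd_mul {n m : ℕ} (P Q : Fin n → Matrix (Fin m) (Fin m) ℝ) :
    (Matrix.of fun x y : Fin n × Fin m => if x.1 = y.1 then P x.1 x.2 y.2 else 0) *
      (Matrix.of fun x y : Fin n × Fin m => if x.1 = y.1 then Q x.1 x.2 y.2 else 0)
      = Matrix.of fun x y : Fin n × Fin m => if x.1 = y.1 then (P x.1 * Q x.1) x.2 y.2 else 0 := by
  ext ⟨l, a⟩ ⟨l', b⟩
  simp only [Matrix.mul_apply, Matrix.of_apply, Fintype.sum_prod_type]
  rw [Finset.sum_eq_single l]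
  · by_cases h : l = l' <;> simp [h]
  · intro c _ hc
    simp [Ne.symm hc]
  · simp

theorem aux_bd_kron {n m p : ℕ} (lam : Fin n → ℝ) (hlam : ∀ l, lam l ≠ 0)
    (F : Fin p → Matrix (Fin m) (Fin m) ℝ) (l l' : Fin n) (a b : Fin m) :
    (∑ i : Fin p, Matrix.kroneckerMap (· * ·)
      ((Matrix.diagonal lam)⁻¹ ^ ((i : ℕ) + 1)) (F i)) (l, a) (l', b)
      = if l = l' then (∑ i : Fin p, ((lam l)⁻¹) ^ ((i : ℕ) + 1) • F i) a b else 0 := by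
  have hinv : (Matrix.diagonal lam)⁻¹ = Matrix.diagonal (fun l => (lam l)⁻¹) := by
    apply Matrix.inv_eq_right_inv
    rw [Matrix.diagonal_mul_diagonal, ← Matrix.diagonal_one]
    congr 1
    funext l
    exact mul_inv_cancel₀ (hlam l)
  simp only [hinv, Matrix.diagonal_pow, Matrix.sum_apply, Matrix.kroneckerMap_apply,
    Matrix.smul_apply, smul_eq_mul]
  by_cases h : l = l'
  · subst h
    simp
  · simp [h]

theorem stmt_5 (n m : ℕ) (hn : 1 ≤ n) (hm : 1 ≤ m) (p q : ℕ)
    (lam : Fin n → ℝ) (hlam : ∀ ℓ, lam ℓ ≠ 0)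
    (Λ : Matrix (Fin n) (Fin n) ℝ) (hΛ : Λ = Matrix.diagonal lam)
    (F : Fin p → Matrix (Fin m) (Fin m) ℝ)
    (G : Fin q → Matrix (Fin m) (Fin m) ℝ)
    (B : Fin n → Matrix (Fin m) (Fin m) ℝ)
    (hB : ∀ ℓ, B ℓ = 1 + ∑ j : Fin q, ((lam ℓ)⁻¹) ^ ((j : ℕ) + 1) • G j)
    (hBinv : ∀ ℓ, IsUnit (B ℓ).det)
    (M₁ M₂ : Matrix (Fin n × Fin m) (Fin n × Fin m) ℝ)
    (hM₁ : M₁ = 1 - ∑ i : Fin p, ((Λ⁻¹ ^ ((i : ℕ) + 1)) ⊗ₖ F i))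
    (hM₂ : M₂ = 1 + ∑ j : Fin q, ((Λ⁻¹ ^ ((j : ℕ) + 1)) ⊗ₖ G j)) :
    IsUnit M₂.det ∧
      ∀ (ℓ ℓ' : Fin n) (a b : Fin m),
        (M₁ * M₂⁻¹) (ℓ, a) (ℓ', b)
          = if ℓ = ℓ' then
              (((1 : Matrix (Fin m) (Fin m) ℝ)
                  - ∑ i : Fin p, ((lam ℓ)⁻¹) ^ ((i : ℕ) + 1) • F i)
                * (B ℓ)⁻¹) a b
            else 0 := by
  subst hΛ
  have e1 : M₁ = Matrix.of fun x y : Fin n × Fin m => if x.1 = y.1 then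
      ((fun l => (1 : Matrix (Fin m) (Fin m) ℝ)
        - ∑ i : Fin p, ((lam l)⁻¹) ^ ((i : ℕ) + 1) • F i) x.1) x.2 y.2 else 0 := by
    ext ⟨l, a⟩ ⟨l', b⟩
    rw [hM₁, Matrix.sub_apply, aux_bd_kron lam hlam]
    by_cases h : l = l' <;> simp [h, Matrix.one_apply]
  have e2 : M₂ = Matrix.of fun x y : Fin n × Fin m => if x.1 = y.1 then
      B x.1 x.2 y.2 else 0 := by
    ext ⟨l, a⟩ ⟨l', b⟩
    rw [hM₂, Matrix.add_apply, aux_bd_kron lam hlam]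
    by_cases h : l = l' <;> simp [h, Matrix.one_apply, hB]
  have e3 : M₂ * (Matrix.of fun x y : Fin n × Fin m => if x.1 = y.1 then
      ((fun l => (B l)⁻¹) x.1) x.2 y.2 else 0) = 1 := by
    rw [e2]
    refine (aux_bd_mul B (fun l => (B l)⁻¹)).trans ?_
    ext ⟨l, a⟩ ⟨l', b⟩
    simp only [Matrix.of_apply, Matrix.mul_nonsing_inv _ (hBinv _)]
    by_cases h : l = l' <;> simp [h, Matrix.one_apply]
  refine ⟨Matrix.isUnit_det_of_right_inverse e3, fun l l' a b => ?_⟩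
  rw [Matrix.inv_eq_right_inv e3, e1]
  exact congrFun (congrFun (aux_bd_mul (fun l => (1 : Matrix (Fin m) (Fin m) ℝ)
        - ∑ i : Fin p, ((lam l)⁻¹) ^ ((i : ℕ) + 1) • F i) (fun l => (B l)⁻¹)) (l, a)) (l', b)
end
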